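/- arXiv:1809.03673 — 3 statements merged into one kernel-verified Lean document; each statement's English description precedes it below -/
import Mathlib

section
/- Let α₁,…,α_u and β₁,…,β_v be positive integers, set B = β₁+⋯+β_v, let E = {n ∈ ℤ : 1 ≤ n < B and n ≡ B (mod 3)}, and for n ∈ E let ν(n) be the positive integer with 4^{ν(n)−1}·n < B ≤ 4^{ν(n)}·n. Assume that for every n ∈ E the equation 3α₁x₁²+⋯+3α_ux_u²+β₁y₁²+⋯+β_vy_v² = 4^{ν(n)}·n has an integer solution with y₁⋯y_v ≢ 0 (mod 3). Then the mixed sum Φ = α₁P₄(x₁)+⋯+α_uP₄(x_u)+β₁P₈(y₁)+⋯+β_vP₈(y_v) is universal if and only if for every nonnegative integer N with 3N+B ≢ 0 (mod 4), the equation 3α₁x₁²+⋯+3α_ux_u²+β₁y₁²+⋯+β_vy_v² = 3N+B has an integer solution with y₁⋯y_v ≢ 0 (mod 3). -/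
/-- The mixed sum with square coefficients `a` and generalized octagonal
coefficients `b` represents the integer `N`. -/
def mixedRepresents (a b : List ℤ) (N : ℤ) : Prop :=
  ∃ x y : List ℤ, x.length = a.length ∧ y.length = b.length ∧
    (List.zipWith (fun c t => c * t ^ 2) a x).sum +
      (List.zipWith (fun c t => c * (3 * t ^ 2 - 2 * t)) b y).sum = N

/-- The mixed sum of generalized 4- and 8-gonal numbers is universal. -/
def mixedUniversal (a b : List ℤ) : Prop :=
  ∀ N : ℤ, 0 ≤ N → mixedRepresents a b N

/-- Solvability of `3·a₁x₁² + ⋯ + 3·a_u x_u² + b₁y₁² + ⋯ + b_v y_v² = m` with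
no `y_j` divisible by `3`. -/
def congRepresents (a b : List ℤ) (m : ℤ) : Prop :=
  ∃ x y : List ℤ, x.length = a.length ∧ y.length = b.length ∧
    (∀ t ∈ y, ¬ (3 : ℤ) ∣ t) ∧
    (List.zipWith (fun c t => 3 * c * t ^ 2) a x).sum +
      (List.zipWith (fun c t => c * t ^ 2) b y).sum = m

lemma aux_sq (a : List ℤ) : ∀ x : List ℤ,
    (List.zipWith (fun c t => 3 * c * t ^ 2) a x).sum
      = 3 * (List.zipWith (fun c t => c * t ^ 2) a x).sum := by
  induction a with
  | nil => intro x; simp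
  | cons c a ih =>
    intro x
    cases x with
    | nil => simp
    | cons t x => simp only [List.zipWith_cons_cons, List.sum_cons, ih x]; ring

lemma aux_oct (b : List ℤ) : ∀ y : List ℤ, y.length = b.length →
    (List.zipWith (fun c t => c * t ^ 2) b (y.map (fun t => 3 * t - 1))).sum
      = 3 * (List.zipWith (fun c t => c * (3 * t ^ 2 - 2 * t)) b y).sum + b.sum := by
  induction b with
  | nil => intro y _; simp
  | cons c b ih =>
    intro y hy
    cases y with
    | nil => simp at hy
    | cons t y =>
      simp only [List.length_cons, Nat.add_right_cancel_iff] at hy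
      simp only [List.map_cons, List.zipWith_cons_cons, List.sum_cons, ih y hy]; ring

lemma aux_inv (b : List ℤ) : ∀ y : List ℤ, y.length = b.length → (∀ t ∈ y, ¬ (3 : ℤ) ∣ t) →
    ∃ z : List ℤ, z.length = b.length ∧
    (List.zipWith (fun c t => c * t ^ 2) b y).sum
      = 3 * (List.zipWith (fun c t => c * (3 * t ^ 2 - 2 * t)) b z).sum + b.sum := by
  induction b with
  | nil => intro y _ _; exact ⟨[], by simp⟩
  | cons c b ih =>
    intro y hy h3
    cases y with
    | nil => simp at hy
    | cons t y =>
      simp only [List.length_cons, Nat.add_right_cancel_iff] at hy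
      obtain ⟨z, hz, e⟩ := ih y hy (fun s hs => h3 s (List.mem_cons_of_mem _ hs))
      have ht := h3 t (by simp)
      have : ∃ s : ℤ, t = 3 * s - 1 ∨ t = -(3 * s - 1) := by
        by_cases h2 : t % 3 = 2
        · exact ⟨(t + 1) / 3, by omega⟩
        · exact ⟨(1 - t) / 3, by omega⟩
      obtain ⟨s, hs⟩ := this
      refine ⟨s :: z, by simp [hz], ?_⟩
      simp only [List.zipWith_cons_cons, List.sum_cons, e]
      rcases hs with rfl | rfl <;> ring

lemma aux_iff (a b : List ℤ) (N : ℤ) :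
    mixedRepresents a b N ↔ congRepresents a b (3 * N + b.sum) := by
  constructor
  · rintro ⟨x, y, hx, hy, e⟩
    refine ⟨x, y.map (fun t => 3 * t - 1), hx, by simpa using hy, ?_, ?_⟩
    · intro t ht
      obtain ⟨s, _, rfl⟩ := List.mem_map.1 ht
      omega
    · rw [aux_sq, aux_oct b y hy, ← e]; ring
  · rintro ⟨x, y, hx, hy, h3, e⟩
    obtain ⟨z, hz, ez⟩ := aux_inv b y hy h3
    refine ⟨x, z, hx, hz, ?_⟩
    rw [aux_sq, ez] at e
    linarith

lemma aux_scale_sum (f : ℤ → ℤ) (b : List ℤ) : ∀ y : List ℤ,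
    (List.zipWith (fun c t => f c * t ^ 2) b (y.map (fun t => 2 * t))).sum
      = 4 * (List.zipWith (fun c t => f c * t ^ 2) b y).sum := by
  induction b with
  | nil => intro y; simp
  | cons c b ih =>
    intro y
    cases y with
    | nil => simp
    | cons t y => simp only [List.map_cons, List.zipWith_cons_cons, List.sum_cons, ih y]; ring

lemma aux_scale (a b : List ℤ) (m : ℤ) (h : congRepresents a b m) :
    congRepresents a b (4 * m) := by
  obtain ⟨x, y, hx, hy, h3, e⟩ := h
  refine ⟨x.map (fun t => 2 * t), y.map (fun t => 2 * t), by simpa using hx,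
    by simpa using hy, ?_, ?_⟩
  · intro t ht
    obtain ⟨s, hs, rfl⟩ := List.mem_map.1 ht
    have := h3 s hs
    omega
  · rw [aux_scale_sum (fun c => 3 * c) a x, aux_scale_sum (fun c => c) b y, ← e]; ring

lemma aux_zero (a : List ℤ) : congRepresents a [] 0 := by
  refine ⟨a.map (fun _ => 0), [], by simp, rfl, by simp, ?_⟩
  induction a with
  | nil => simp
  | cons c a ih => simpa using ih

theorem reduction_lemma (a b : List ℤ)
    (ha : ∀ c ∈ a, 0 < c) (hb : ∀ c ∈ b, 0 < c)
    (h : ∀ n : ℤ, 1 ≤ n → n < b.sum → n ≡ b.sum [ZMOD 3] →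
      ∀ ν : ℕ, 1 ≤ ν → 4 ^ (ν - 1) * n < b.sum → b.sum ≤ 4 ^ ν * n →
        congRepresents a b (4 ^ ν * n)) :
    mixedUniversal a b ↔
      ∀ N : ℤ, 0 ≤ N → ¬ (4 : ℤ) ∣ (3 * N + b.sum) →
        congRepresents a b (3 * N + b.sum) := by
  constructor
  · intro hu N hN _
    exact (aux_iff a b N).1 (hu N hN)
  · intro hr
    have hB : b = [] ∨ 0 < b.sum := by
      cases b with
      | nil => exact Or.inl rfl
      | cons c b =>
        right
        exact List.sum_pos _ hb (by simp)
    have hB0 : 0 ≤ b.sum := by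
      rcases hB with rfl | hB
      · simp
      · exact hB.le
    have key : ∀ k : ℕ, b.sum ≤ (k : ℤ) → (3 : ℤ) ∣ (k : ℤ) - b.sum →
        congRepresents a b (k : ℤ) := by
      intro k
      induction k using Nat.strong_induction_on with
      | _ k ih =>
        intro hk hd
        by_cases h4 : (4 : ℤ) ∣ (k : ℤ)
        · rcases Nat.eq_zero_or_pos k with rfl | hpos
          · rcases hB with rfl | hB
            · simpa using aux_zero a
            · simp at hk; omega
          · obtain ⟨j, rfl⟩ : 4 ∣ k := by exact_mod_cast h4
            push_cast at *
            by_cases hj : b.sum ≤ (j : ℤ)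
            · exact aux_scale a b j (ih j (by omega) hj (by omega))
            · have := h j (by omega) (by omega)
                (Int.modEq_iff_dvd.2 (by omega)) 1 le_rfl (by simpa using hj)
                (by simpa using hk)
              simpa using this
        · obtain ⟨N, hN⟩ := hd
          have e : (k : ℤ) = 3 * N + b.sum := by omega
          rw [e] at h4 ⊢
          exact hr N (by omega) h4
    intro N hN
    rw [aux_iff]
    have := key (3 * N + b.sum).toNat
    rw [Int.toNat_of_nonneg (by omega)] at this
    exact this (by omega) (by omega)
end

section
/- For each α ∈ {1, 2} and every nonnegative integer N, the equation αx² + (3y² − 2y) + (3z² − 2z) = N has an integer solution (x, y, z) ∈ ℤ³. That is, the ternary mixed sums x²+P₈(y)+P₈(z) and 2x²+P₈(y)+P₈(z) of generalized 4- and 8-gonal numbers are universal. -/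
def TQ (a b c d e f x y z : ℤ) : ℤ :=
  a*x^2+b*y^2+c*z^2+2*d*y*z+2*e*x*z+2*f*x*y

structure TGood (D n a b c d e f : ℤ) : Prop where
  ha : 0 < a
  hG : 0 < a*b-f^2
  hD : a*b*c+2*d*e*f-a*d^2-b*e^2-c*f^2 = D
  hR : ∀ x y z : ℤ, 3 ∣ TQ a b c d e f x y z →
    3 ∣ a*x+f*y+e*z ∧ 3 ∣ f*x+b*y+d*z ∧ 3 ∣ e*x+d*y+c*z
  hn : ∃ x y z : ℤ, TQ a b c d e f x y z = n
  ho : ¬ (2 ∣ a ∧ 2 ∣ b ∧ 2 ∣ c)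

theorem TGood.swapxy {D n a b c d e f : ℤ} (h : TGood D n a b c d e f) :
    TGood D n b a c e d f := by
  obtain ⟨ha, hG, hD, hR, ⟨x, y, z, hn⟩, ho⟩ := h
  refine ⟨by nlinarith [sq_nonneg f], by linarith, by linarith, ?_, ⟨y, x, z, ?_⟩, by tauto⟩
  · intro x y z h
    have := hR y x z (by convert h using 1; unfold TQ; ring)
    obtain ⟨h1, h2, h3⟩ := this
    refine ⟨?_, ?_, ?_⟩
    · convert h2 using 1; ring
    · convert h1 using 1; ring
    · convert h3 using 1; ring
  · rw [← hn]; unfold TQ; ring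

theorem TGood.swapyz {D n a b c d e f : ℤ} (h : TGood D n a b c d e f) (hD0 : 0 < D) :
    TGood D n a c b d f e := by
  obtain ⟨ha, hG, hD, hR, ⟨x, y, z, hn⟩, ho⟩ := h
  refine ⟨ha, ?_, by linarith, ?_, ⟨x, z, y, ?_⟩, by tauto⟩
  · have h1 : (a*b-f^2)*(a*c-e^2) = a * D + (a*d-e*f)^2 := by rw [← hD]; ring
    have h2 : 0 < a * D := mul_pos ha hD0
    have h3 : 0 < (a*b-f^2)*(a*c-e^2) := by nlinarith [sq_nonneg (a*d-e*f)]
    exact (pos_iff_pos_of_mul_pos h3).1 hG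
  · intro x y z h
    have := hR x z y (by convert h using 1; unfold TQ; ring)
    obtain ⟨h1, h2, h3⟩ := this
    refine ⟨?_, ?_, ?_⟩
    · convert h1 using 1; ring
    · convert h3 using 1; ring
    · convert h2 using 1; ring
  · rw [← hn]; unfold TQ; ring

theorem TGood.shxy {D n a b c d e f : ℤ} (h : TGood D n a b c d e f) (k : ℤ) :
    TGood D n a (b+2*k*f+k^2*a) c (d+k*e) e (f+k*a) := by
  obtain ⟨ha, hG, hD, hR, ⟨x, y, z, hn⟩, ho⟩ := h
  refine ⟨ha, by linarith, by linarith, ?_, ⟨x-k*y, y, z, ?_⟩, ?_⟩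
  · intro x y z h
    obtain ⟨h1, h2, h3⟩ := hR (x+k*y) y z (by convert h using 1; unfold TQ; ring)
    refine ⟨?_, ?_, ?_⟩
    · convert h1 using 1; ring
    · have e1 : (f+k*a)*x+(b+2*k*f+k^2*a)*y+(d+k*e)*z =
          (f*(x+k*y)+b*y+d*z) + k*(a*(x+k*y)+f*y+e*z) := by ring
      rw [e1]
      exact dvd_add h2 (h1.mul_left k)
    · convert h3 using 1; ring
  · rw [← hn]; unfold TQ; ring
  · rintro ⟨h1, h2, h3⟩
    refine ho ⟨h1, ?_, h3⟩
    have e1 : b = (b+2*k*f+k^2*a) - (2*(k*f) + k^2*a) := by ring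
    rw [e1]
    exact dvd_sub h2 (dvd_add (Dvd.intro (k*f) rfl) (h1.mul_left (k^2)))

theorem TGood.shxz {D n a b c d e f : ℤ} (h : TGood D n a b c d e f) (hD0 : 0 < D) (k : ℤ) :
    TGood D n a b (c+2*k*e+k^2*a) (d+k*f) (e+k*a) f :=
  ((h.swapyz hD0).shxy k).swapyz hD0

theorem TGood.shyz {D n a b c d e f : ℤ} (h : TGood D n a b c d e f) (hD0 : 0 < D) (k : ℤ) :
    TGood D n a b (c+2*k*d+k^2*b) (d+k*b) (e+k*f) f :=
  (h.swapxy.shxz hD0 k).swapxy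

theorem exists_shift (u m : ℤ) (hm : 0 < m) : ∃ k : ℤ, 2*(u+k*m) ≤ m ∧ -m ≤ 2*(u+k*m) := by
  refine ⟨-((2*u+m)/(2*m)), ?_⟩
  have h1 := Int.emod_add_mul_ediv (2*u+m) (2*m)
  have h2 := Int.emod_nonneg (2*u+m) (show 2*m ≠ 0 by omega)
  have h3 := Int.emod_lt_of_pos (2*u+m) (show 0 < 2*m by omega)
  constructor <;> nlinarith

theorem TGood.reduce {D n a b c d e f : ℤ} (h : TGood D n a b c d e f) (hD0 : 0 < D) :
    ∃ a b c d e f : ℤ, TGood D n a b c d e f ∧ a ≤ b ∧ a*b-f^2 ≤ a*c-e^2 ∧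
      2*f ≤ a ∧ -a ≤ 2*f ∧ 2*e ≤ a ∧ -a ≤ 2*e ∧
      2*(a*d-e*f) ≤ a*b-f^2 ∧ -(a*b-f^2) ≤ 2*(a*d-e*f) := by
  classical
  have h1 : ∃ k : ℕ, ∃ b c d e f : ℤ, TGood D n k b c d e f :=
    ⟨a.toNat, b, c, d, e, f, by rwa [Int.toNat_of_nonneg h.ha.le]⟩
  have hmin1 := fun m => Nat.find_min' h1 (m := m)
  have hsp1 := Nat.find_spec h1
  generalize Nat.find h1 = a at hmin1 hsp1
  have h2 : ∃ k : ℕ, ∃ b c d e f : ℤ, TGood D n a b c d e f ∧ (a:ℤ)*b-f^2 = k := by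
    obtain ⟨b, c, d, e, f, h⟩ := hsp1
    exact ⟨(a*b-f^2).toNat, b, c, d, e, f, h, by rw [Int.toNat_of_nonneg h.hG.le]⟩
  have hmin2 := fun m => Nat.find_min' h2 (m := m)
  have hsp2 := Nat.find_spec h2
  generalize Nat.find h2 = G at hmin2 hsp2
  obtain ⟨b, c, d, e, f, h, hG⟩ := hsp2
  have hapos := h.ha
  obtain ⟨k, hk1, hk2⟩ := exists_shift (a*d-e*f) (a*b-f^2) h.hG
  replace h := h.shyz hD0 k
  have e1 : a*d-e*f+k*(a*b-f^2) = a*(d+k*b)-(e+k*f)*f := by ring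
  rw [e1] at hk1 hk2
  generalize c+2*k*d+k^2*b = c at *
  generalize d+k*b = d at *
  generalize e+k*f = e at *
  clear e1
  obtain ⟨l, hl1, hl2⟩ := exists_shift f a hapos
  replace h := h.shxy l
  have e1 : a*d-e*f = a*(d+l*e)-e*(f+l*a) := by ring
  have e2 : a*b-f^2 = a*(b+2*l*f+l^2*a)-(f+l*a)^2 := by ring
  rw [e1, e2] at hk1 hk2
  rw [e2] at hG
  clear e1 e2
  generalize b+2*l*f+l^2*a = b at *
  generalize d+l*e = d at *
  generalize f+l*a = f at *
  obtain ⟨m, hm1, hm2⟩ := exists_shift e a hapos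
  replace h := h.shxz hD0 m
  have e1 : a*d-e*f = a*(d+m*f)-(e+m*a)*f := by ring
  rw [e1] at hk1 hk2
  clear e1
  generalize c+2*m*e+m^2*a = c at *
  generalize d+m*f = d at *
  generalize e+m*a = e at *
  refine ⟨a, b, c, d, e, f, h, ?_, ?_, hl1, hl2, hm1, hm2, hk1, hk2⟩
  · have hs := h.swapxy
    have := hmin1 b.toNat ⟨a, c, e, d, f, by rwa [Int.toNat_of_nonneg hs.ha.le]⟩
    have := hs.ha
    omega
  · have hs := h.swapyz hD0
    have := hmin2 (a*c-e^2).toNat ⟨c, b, d, f, e, hs, by rw [Int.toNat_of_nonneg hs.hG.le]⟩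
    have := hs.hG
    rw [hG]
    omega

theorem TGood.final {D n a b c d e f : ℤ} (h : TGood D n a b c d e f) (hD : D = 3 ∨ D = 6) :
    ∃ x y z : ℤ, x^2+y^2+D*z^2 = n := by
  obtain ⟨a, b, c, d, e, f, h, hab, hGK, hf1, hf2, he1, he2, hH1, hH2⟩ :=
    h.reduce (by omega)
  obtain ⟨ha, hG, hdet, hR, ⟨x, y, z, hn⟩, ho⟩ := h
  have h1 : (a*b-f^2)*(a*c-e^2) = a * D + (a*d-e*f)^2 := by rw [← hdet]; ring
  obtain ⟨G, hGd⟩ : ∃ G, G = a*b-f^2 := ⟨_, rfl⟩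
  obtain ⟨K, hKd⟩ : ∃ K, K = a*c-e^2 := ⟨_, rfl⟩
  obtain ⟨H, hHd⟩ : ∃ H, H = a*d-e*f := ⟨_, rfl⟩
  rw [← hGd, ← hKd, ← hHd] at h1
  rw [← hGd] at hG hH1 hH2 hGK
  rw [← hHd] at hH1 hH2
  rw [← hKd] at hGK
  have hD6 : D ≤ 6 := by omega
  have hGa : 3*a^2 ≤ 4*G := by nlinarith
  have hGD : 3*G^2 ≤ 4*(a*D) := by nlinarith
  have ha2 : a ≤ 2 := by
    by_contra hc
    push Not at hc
    have : 9*a^4 ≤ 16*G^2 := by nlinarith [sq_nonneg a]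
    have h27 : 27*a^4 ≤ 64*a*D := by nlinarith
    have h28 : 27*a^3 ≤ 64*D := by
      have : a*(27*a^3) ≤ a*(64*D) := by nlinarith
      exact le_of_mul_le_mul_left this ha
    have : 27 ≤ a^3 := by nlinarith [sq_nonneg (a-3), sq_nonneg a]
    omega
  have hG4 : G ≤ 4 := by nlinarith
  have hG1 : 1 ≤ G := by omega
  obtain rfl | rfl : a = 1 ∨ a = 2 := by omega
  · obtain rfl : f = 0 := by omega
    obtain rfl : e = 0 := by omega
    obtain rfl : G = b := by linarith
    obtain rfl : K = c := by linarith
    obtain rfl : H = d := by linarith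
    have hG2 : G ≤ 2 := by nlinarith
    obtain rfl | rfl : G = 1 ∨ G = 2 := by omega
    · obtain rfl : H = 0 := by omega
      refine ⟨x, y, z, ?_⟩
      rw [← hn]; unfold TQ
      have : K = D := by linarith
      rw [this]; ring
    · exfalso
      have h4 := hR 1 1 0
      have h5 := hR 1 1 1
      have h6 := hR 1 0 1
      unfold TQ at h4 h5 h6
      have hH : H = 0 ∨ H = 1 ∨ H = -1 := by omega
      rcases hD with rfl | rfl <;> rcases hH with rfl | rfl | rfl <;> omega
  · exfalso
    apply ho
    have hf : f = 0 ∨ f = 1 ∨ f = -1 := by omega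
    have he : e = 0 ∨ e = 1 ∨ e = -1 := by omega
    have hG3 : 3 ≤ G := by omega
    have hHH : H = 0 ∨ H = 1 ∨ H = -1 ∨ H = 2 ∨ H = -2 := by omega
    obtain rfl | rfl : G = 3 ∨ G = 4 := by omega
    all_goals
      rcases hD with rfl | rfl <;> rcases hHH with rfl | rfl | rfl | rfl | rfl <;>
      rcases hf with rfl | rfl | rfl <;> rcases he with rfl | rfl | rfl <;> omega

theorem mod3_aux : ∀ A s n x y z : ZMod 3, n ≠ 0 → A*n-s^2 = 1 →
    A*x^2+n*y^2+n*z^2+2*0*y*z+2*1*x*z+2*s*x*y = 0 →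
    A*x+s*y+1*z = 0 ∧ s*x+n*y+0*z = 0 ∧ 1*x+0*y+n*z = 0 := by
  decide +kernel

theorem core (D n b : ℤ) (p : ℕ) [Fact p.Prime] (hD : D = 3 ∨ D = 6) (hp : (p:ℤ) = b*n-D)
    (hb : 0 < b) (hb3 : b % 3 = 1) (hn3 : n % 3 ≠ 0) (hodd : p % 2 = 1)
    (hs : IsSquare ((-b : ℤ) : ZMod p)) : ∃ x y z : ℤ, x^2+y^2+D*z^2 = n := by
  obtain ⟨t, ht⟩ := hs
  obtain ⟨s, rfl⟩ := ZMod.intCast_surjective t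
  have h1 : ((s^2+b : ℤ) : ZMod p) = 0 := by
    push_cast at ht ⊢
    rw [sq, ← ht]; ring
  obtain ⟨A, hA⟩ := (ZMod.intCast_zmod_eq_zero_iff_dvd _ _).1 h1
  have hp0 : (0:ℤ) < p := by exact_mod_cast (Fact.out : p.Prime).pos
  have hb3' : ((b : ℤ) : ZMod 3) = 1 := by
    have := (ZMod.intCast_eq_intCast_iff b 1 3).2 (by unfold Int.ModEq; omega)
    simpa using this
  have hD3' : ((D : ℤ) : ZMod 3) = 0 :=
    (ZMod.intCast_zmod_eq_zero_iff_dvd _ 3).2 (by push_cast; omega)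
  have hn3' : ((n : ℤ) : ZMod 3) ≠ 0 := by
    rw [Ne, ZMod.intCast_zmod_eq_zero_iff_dvd _ 3]; push_cast; omega
  have hpn : (((p:ℤ) : ℤ) : ZMod 3) = n := by
    rw [hp]; push_cast; rw [hb3', hD3']; ring
  have hA3 : (A : ZMod 3) * n - s^2 = 1 := by
    have := congrArg (Int.cast : ℤ → ZMod 3) hA
    rw [Int.cast_mul, hpn] at this
    push_cast at this
    rw [hb3'] at this
    linear_combination -this
  have key : TGood D n A p n 0 1 s := by
    refine ⟨?_, ?_, ?_, ?_, ⟨0, 0, 1, by unfold TQ; ring⟩, by omega⟩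
    · have : 0 < (p:ℤ) * A := by rw [← hA]; positivity
      exact (pos_iff_pos_of_mul_pos this).1 hp0
    · linarith
    · linear_combination (-n)*hA - hp
    · intro x y z h
      have h' := (ZMod.intCast_zmod_eq_zero_iff_dvd _ 3).2 h
      unfold TQ at h'
      have h3 := fun u : ℤ => ZMod.intCast_zmod_eq_zero_iff_dvd u 3
      have := mod3_aux A s n x y z hn3' hA3 (by
        push_cast at h' hpn; linear_combination h' - (y:ZMod 3)^2*hpn)
      rw [← hpn] at this
      obtain ⟨i1, i2, i3⟩ := this
      refine ⟨(h3 _).1 ?_, (h3 _).1 ?_, (h3 _).1 ?_⟩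
      · rw [← i1]; push_cast; ring
      · rw [← i2]; push_cast; ring
      · rw [← i3]; rw [hpn]; push_cast; ring
  exact key.final hD

theorem coprime3 (n : ℤ) (hn3 : n % 3 ≠ 0) : IsCoprime (3:ℤ) n := by
  rw [Int.prime_three.coprime_iff_not_dvd]; omega

theorem coprime2 (n : ℤ) (hn3 : n % 2 ≠ 0) : IsCoprime (2:ℤ) n := by
  rw [Int.prime_two.coprime_iff_not_dvd]; omega

theorem rep3 (n : ℤ) (hn : 0 < n) (hn3 : n % 3 ≠ 0) :
    ∃ x y z : ℤ, x^2+y^2+3*z^2 = n := by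
  have cop : IsCoprime (4*n-3) ((24*n.toNat : ℕ) : ℤ) := by
    push_cast
    rw [Int.toNat_of_nonneg hn.le]
    have c2 := (coprime2 (4*n-3) (by omega)).symm
    have c3 := (coprime3 (4*n-3) (by omega)).symm
    have cn : IsCoprime (4*n-3) n := by
      have h := coprime3 n hn3
      obtain ⟨u, v, h⟩ := h
      exact ⟨-u, v+4*u, by linear_combination h⟩
    have : (24*n : ℤ) = 2*2*2*3*n := by ring
    rw [this]
    exact (((c2.mul_right c2).mul_right c2).mul_right c3).mul_right cn
  obtain ⟨p, hpg, hp, hm⟩ := Nat.forall_exists_prime_gt_and_zmodEq (4*n).toNat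
    (q := 24*n.toNat) (by omega) cop
  obtain ⟨k, hk⟩ := hm.symm.dvd
  push_cast at hk
  rw [Int.toNat_of_nonneg hn.le] at hk
  have hk0 : 0 ≤ k := by
    by_contra hc
    push Not at hc
    have : (4*n) < (p:ℤ) := by omega
    nlinarith
  lift k to ℕ using hk0
  obtain ⟨c, hc⟩ : ∃ c : ℕ, c = 6*k+1 := ⟨_, rfl⟩
  have hc' : (c:ℤ) = 6*k+1 := by exact_mod_cast hc
  have hpc : (p:ℤ) = (4*c)*n-3 := by rw [hc']; linear_combination hk
  have hp4 : p % 4 = 1 := by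
    have h : (p:ℤ) = 4*(c*n)-3 := by rw [hpc]; ring
    generalize (c*n:ℤ) = u at h
    omega
  have hpo : Odd p := Nat.odd_iff.2 (by omega)
  have hco : Odd c := Nat.odd_iff.2 (by omega)
  have : Fact p.Prime := ⟨hp⟩
  refine core 3 n (4*c) p (Or.inl rfl) hpc (by omega) (by omega) hn3 (by omega) ?_
  apply ZMod.isSquare_of_jacobiSym_eq_one
  rw [jacobiSym.neg _ hpo, ZMod.χ₄_nat_one_mod_four hp4, jacobiSym.mul_left, jacobiSym.at_four hpo,
    one_mul, one_mul, jacobiSym.quadratic_reciprocity_one_mod_four' hco hp4]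
  rw [jacobiSym.mod_left' (a₂ := -3), jacobiSym.mod_right _ hco]
  · have : c % (4 * (-3:ℤ).natAbs) = 1 ∨ c % (4 * (-3:ℤ).natAbs) = 7 := by
      have : (4 * (-3:ℤ).natAbs) = 12 := rfl
      rw [this]; omega
    rcases this with h | h <;> rw [h] <;> norm_num
  · rw [hpc]
    apply Int.ModEq.symm
    apply (Int.modEq_iff_dvd).2
    exact ⟨4*n, by ring⟩

theorem rep6 (n : ℤ) (hn : 0 < n) (hn3 : n % 3 ≠ 0) (hn2 : n % 2 ≠ 0) :
    ∃ x y z : ℤ, x^2+y^2+6*z^2 = n := by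
  have cop : IsCoprime (7*n-6) ((24*n.toNat : ℕ) : ℤ) := by
    push_cast
    rw [Int.toNat_of_nonneg hn.le]
    have c2 := (coprime2 (7*n-6) (by omega)).symm
    have c3 := (coprime3 (7*n-6) (by omega)).symm
    have cn : IsCoprime (7*n-6) n := by
      have h := (coprime2 n hn2).mul_left (coprime3 n hn3)
      obtain ⟨u, v, h⟩ := h
      exact ⟨-u, v+7*u, by linear_combination h⟩
    have : (24*n : ℤ) = 2*2*2*3*n := by ring
    rw [this]
    exact (((c2.mul_right c2).mul_right c2).mul_right c3).mul_right cn
  obtain ⟨p, hpg, hp, hm⟩ := Nat.forall_exists_prime_gt_and_zmodEq (7*n).toNat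
    (q := 24*n.toNat) (by omega) cop
  obtain ⟨k, hk⟩ := hm.symm.dvd
  push_cast at hk
  rw [Int.toNat_of_nonneg hn.le] at hk
  have hk0 : 0 ≤ k := by
    by_contra hc
    push Not at hc
    have : (7*n) < (p:ℤ) := by omega
    nlinarith
  lift k to ℕ using hk0
  obtain ⟨c, hc⟩ : ∃ c : ℕ, c = 24*k+7 := ⟨_, rfl⟩
  have hc' : (c:ℤ) = 24*k+7 := by exact_mod_cast hc
  have hpc : (p:ℤ) = c*n-6 := by rw [hc']; linear_combination hk
  have hp2 : p % 2 = 1 := by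
    have h : (p:ℤ) = 2*(12*(k*n)+3*n-3)+n := by rw [hpc, hc']; ring
    generalize (k*n:ℤ) = u at h
    omega
  have hpo : Odd p := Nat.odd_iff.2 (by omega)
  have hco : Odd c := Nat.odd_iff.2 (by omega)
  have : Fact p.Prime := ⟨hp⟩
  refine core 6 n c p (Or.inr rfl) hpc (by omega) (by omega) hn3 (by omega) ?_
  apply ZMod.isSquare_of_jacobiSym_eq_one
  have hJ : jacobiSym p c = 1 := by
    rw [jacobiSym.mod_left' (a₂ := -6), jacobiSym.mod_right _ hco]
    · have : c % (4 * (-6:ℤ).natAbs) = 7 := by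
        have : (4 * (-6:ℤ).natAbs) = 24 := rfl
        rw [this]; omega
      rw [this]; norm_num
    · rw [hpc]
      apply Int.ModEq.symm
      apply (Int.modEq_iff_dvd).2
      exact ⟨n, by ring⟩
  rw [jacobiSym.neg _ hpo]
  obtain h4 | h4 : p % 4 = 1 ∨ p % 4 = 3 := by omega
  · rw [ZMod.χ₄_nat_one_mod_four h4, jacobiSym.quadratic_reciprocity_one_mod_four' hco h4, hJ]
    rfl
  · rw [ZMod.χ₄_nat_three_mod_four h4,
      jacobiSym.quadratic_reciprocity_three_mod_four (by omega) h4, hJ]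
    rfl

theorem rep6' (n : ℤ) (hn : 0 < n) (hn3 : n % 3 ≠ 0) :
    ∃ x y z : ℤ, x^2+y^2+6*z^2 = n := by
  by_cases hn2 : n % 2 = 0
  · obtain ⟨x, y, z, h⟩ := rep3 (n/2) (by omega) (by omega)
    have : n = 2*(n/2) := by omega
    exact ⟨x+y, x-y, z, by rw [this, ← h]; ring⟩
  · exact rep6 n hn hn3 hn2

theorem choose_sign (u : ℤ) (h : u % 3 ≠ 0) : ∃ y : ℤ, (3*y-1)^2 = u^2 := by
  obtain h | h : u % 3 = 1 ∨ u % 3 = 2 := by omega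
  · exact ⟨(1-u)/3, by rw [show 3*((1-u)/3)-1 = -u by omega]; ring⟩
  · exact ⟨(1+u)/3, by rw [show 3*((1+u)/3)-1 = u by omega]⟩

theorem finish (α N x u v : ℤ) (h : u^2+v^2+3*α*x^2 = 3*N+2) :
    ∃ x y z : ℤ, α * x ^ 2 + (3 * y ^ 2 - 2 * y) + (3 * z ^ 2 - 2 * z) = N := by
  have h3 : (u^2+v^2) % 3 = 2 := by
    have : u^2+v^2 = 3*(N-α*x^2)+2 := by linear_combination h
    omega
  have huv : u % 3 ≠ 0 ∧ v % 3 ≠ 0 := by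
    have hu : u % 3 = 0 ∨ u % 3 = 1 ∨ u % 3 = 2 := by omega
    have hv : v % 3 = 0 ∨ v % 3 = 1 ∨ v % 3 = 2 := by omega
    rcases hu with hu | hu | hu <;> rcases hv with hv | hv | hv <;>
      simp [sq, Int.add_emod, Int.mul_emod, hu, hv] at h3 ⊢
  obtain ⟨y, hy⟩ := choose_sign u huv.1
  obtain ⟨z, hz⟩ := choose_sign v huv.2
  refine ⟨x, y, z, ?_⟩
  have : 3*(α * x ^ 2 + (3 * y ^ 2 - 2 * y) + (3 * z ^ 2 - 2 * z)) = 3*N := by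
    linear_combination h + hy + hz
  omega

theorem universal_alphax2_P8_P8 :
    ∀ α ∈ ({1, 2} : Set ℤ), ∀ N : ℤ, 0 ≤ N →
      ∃ x y z : ℤ,
        α * x ^ 2 + (3 * y ^ 2 - 2 * y) + (3 * z ^ 2 - 2 * z) = N := by
  intro α hα N hN
  rcases hα with rfl | rfl
  · obtain ⟨u, v, x, h⟩ := rep3 (3*N+2) (by omega) (by omega)
    exact finish 1 N x u v (by linear_combination h)
  · obtain ⟨u, v, x, h⟩ := rep6' (3*N+2) (by omega) (by omega)
    exact finish 2 N x u v (by linear_combination h)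
end

section
/- For every integer α with 4 ≤ α ≤ 6 and every nonnegative integer N, the equation x² + y² + αz² + 3(3t² − 2t) = N has an integer solution in ℤ⁴; and for every integer β with 3 ≤ β ≤ 6 and every nonnegative integer N, the equation x² + y² + 3(3z² − 2z) + β(3t² − 2t) = N has an integer solution in ℤ⁴. That is, the quaternary mixed sums x²+y²+αz²+3P₈(t) (4 ≤ α ≤ 6) and x²+y²+3P₈(z)+βP₈(t) (3 ≤ β ≤ 6) are universal. -/
theorem near_mul (D B : ℤ) (hB : 0 < B) : ∃ m : ℤ, 4 * (D + B * m) ^ 2 ≤ B ^ 2 := by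
  have h1 := Int.emod_add_mul_ediv D B
  have h2 := Int.emod_nonneg D hB.ne'
  have h3 := Int.emod_lt_of_pos D hB
  by_cases h : 2 * (D % B) ≤ B
  · refine ⟨-(D / B), ?_⟩
    have : D + B * -(D / B) = D % B := by linarith
    rw [this]; nlinarith
  · refine ⟨-(D / B) - 1, ?_⟩
    have : D + B * (-(D / B) - 1) = D % B - B := by linarith
    rw [this]; nlinarith

theorem bin_red (Δ : ℤ) (hΔ : 0 < Δ) : ∀ k : ℕ, ∀ B D C : ℤ, B.toNat = k → 0 < B →
    B * C - D ^ 2 = Δ → ∃ p q r s : ℤ, p * s - q * r = 1 ∧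
      0 < B * p ^ 2 + 2 * D * p * r + C * r ^ 2 ∧
      3 * (B * p ^ 2 + 2 * D * p * r + C * r ^ 2) ^ 2 ≤ 4 * Δ := by
  intro k
  induction k using Nat.strong_induction_on with
  | _ k ih =>
    intro B D C hk hB hd
    by_cases h : 3 * B ^ 2 ≤ 4 * Δ
    · exact ⟨1, 0, 0, 1, by norm_num, by simpa using hB, by simpa using h⟩
    · push Not at h
      obtain ⟨m, hm⟩ := near_mul D B hB
      have hC : B * (C + 2 * D * m + B * m ^ 2) = Δ + (D + B * m) ^ 2 := by
        linear_combination hd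
      have hpos : 0 < C + 2 * D * m + B * m ^ 2 := by
        have : 0 < B * (C + 2 * D * m + B * m ^ 2) := by rw [hC]; positivity
        exact pos_of_mul_pos_right this hB.le
      have hlt : C + 2 * D * m + B * m ^ 2 < B := by
        have : B * (C + 2 * D * m + B * m ^ 2) < B * B := by rw [hC]; nlinarith
        exact lt_of_mul_lt_mul_left this hB.le
      obtain ⟨p, q, r, s, h1, h2, h3⟩ := ih (C + 2 * D * m + B * m ^ 2).toNat (by omega)
        (C + 2 * D * m + B * m ^ 2) (-(D + B * m)) B rfl hpos (by linear_combination hd)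
      have e : B * (m * p - r) ^ 2 + 2 * D * (m * p - r) * p + C * p ^ 2 =
        (C + 2 * D * m + B * m ^ 2) * p ^ 2 + 2 * -(D + B * m) * p * r + B * r ^ 2 := by ring
      refine ⟨m * p - r, m * q - s, p, q, by linear_combination h1, ?_, ?_⟩
      · rw [e]; exact h2
      · rw [e]; exact h3

theorem ter_red : ∀ k : ℕ, ∀ a b c d e f : ℤ, a.toNat = k → 0 < a → 0 < a * b - f ^ 2 →
    a * b * c + 2 * d * e * f - a * d ^ 2 - b * e ^ 2 - c * f ^ 2 = 1 →
    ∀ x y z : ℤ, ∃ u v w : ℤ, a * x ^ 2 + b * y ^ 2 + c * z ^ 2 + 2 * d * y * z + 2 * e * x * z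
      + 2 * f * x * y = u ^ 2 + v ^ 2 + w ^ 2 := by
  intro k
  induction k using Nat.strong_induction_on with
  | _ k ih =>
    intro a b c d e f hk ha hB hdet x y z
    obtain ⟨p, q, r, s, h1, h2, h3⟩ := bin_red a ha _ (a * b - f ^ 2) (a * d - e * f)
      (a * c - e ^ 2) rfl hB (by linear_combination a * hdet)
    obtain ⟨b', hb'⟩ : ∃ b', b' = b * p ^ 2 + 2 * d * p * r + c * r ^ 2 := ⟨_, rfl⟩
    obtain ⟨c', hc'⟩ : ∃ c', c' = b * q ^ 2 + 2 * d * q * s + c * s ^ 2 := ⟨_, rfl⟩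
    obtain ⟨d', hd'⟩ : ∃ d', d' = b * p * q + d * (p * s + q * r) + c * r * s := ⟨_, rfl⟩
    obtain ⟨f', hf'⟩ : ∃ f', f' = f * p + e * r := ⟨_, rfl⟩
    obtain ⟨e', he'⟩ : ∃ e', e' = f * q + e * s := ⟨_, rfl⟩
    have hB' : (a * b - f ^ 2) * p ^ 2 + 2 * (a * d - e * f) * p * r + (a * c - e ^ 2) * r ^ 2
        = a * b' - f' ^ 2 := by subst hb' hf'; ring
    rw [hB'] at h2 h3
    have hdet' : a * b' * c' + 2 * d' * e' * f' - a * d' ^ 2 - b' * e' ^ 2 - c' * f' ^ 2 = 1 := by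
      have : a * b' * c' + 2 * d' * e' * f' - a * d' ^ 2 - b' * e' ^ 2 - c' * f' ^ 2 =
        (a * b * c + 2 * d * e * f - a * d ^ 2 - b * e ^ 2 - c * f ^ 2) * (p * s - q * r) ^ 2 := by
        subst hb' hc' hd' hf' he'; ring
      rw [this, h1, hdet]; norm_num
    obtain ⟨y', hy'⟩ : ∃ y', y' = s * y - q * z := ⟨_, rfl⟩
    obtain ⟨z', hz'⟩ : ∃ z', z' = - r * y + p * z := ⟨_, rfl⟩
    have hy : y = p * y' + q * z' := by subst hy' hz'; linear_combination (-y) * h1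
    have hz : z = r * y' + s * z' := by subst hy' hz'; linear_combination (-z) * h1
    have hform : a * x ^ 2 + b * y ^ 2 + c * z ^ 2 + 2 * d * y * z + 2 * e * x * z
      + 2 * f * x * y = a * x ^ 2 + b' * y' ^ 2 + c' * z' ^ 2 + 2 * d' * y' * z' + 2 * e' * x * z'
      + 2 * f' * x * y' := by
      rw [hy, hz]; subst hb' hc' hd' hf' he'; ring
    rw [hform]
    clear hform hy hz hy' hz' hb' hc' hd' hf' he' hB' h1 hdet hB
    obtain ⟨m, hm⟩ := near_mul f' a ha
    obtain ⟨F, hF⟩ : ∃ F, F = f' + a * m := ⟨_, rfl⟩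
    obtain ⟨G, hG⟩ : ∃ G, G = b' + 2 * f' * m + a * m ^ 2 := ⟨_, rfl⟩
    obtain ⟨H, hH⟩ : ∃ H, H = d' + e' * m := ⟨_, rfl⟩
    obtain ⟨X, hX⟩ : ∃ X, X = x - m * y' := ⟨_, rfl⟩
    have hform : a * x ^ 2 + b' * y' ^ 2 + c' * z' ^ 2 + 2 * d' * y' * z' + 2 * e' * x * z'
      + 2 * f' * x * y' = a * X ^ 2 + G * y' ^ 2 + c' * z' ^ 2 + 2 * H * y' * z' + 2 * e' * X * z'
      + 2 * F * X * y' := by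
      subst hF hG hH hX; ring
    have hdet2 : a * G * c' + 2 * H * e' * F - a * H ^ 2 - G * e' ^ 2 - c' * F ^ 2 = 1 := by
      rw [← hdet']; subst hF hG hH; ring
    have hB2 : a * b' - f' ^ 2 = a * G - F ^ 2 := by subst hF hG; ring
    rw [hform]
    rw [hB2] at h2 h3
    rw [← hF] at hm
    clear hform hdet' hB2 hF hG hH hX
    have hGpos : 0 < G := by
      have : 0 < a * G := by nlinarith [sq_nonneg F]
      exact pos_of_mul_pos_right this ha.le
    by_cases hGa : G < a
    · obtain ⟨u, v, w, huv⟩ := ih G.toNat (by omega) G a c' e' H F rfl hGpos (by linarith)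
        (by linear_combination hdet2) y' X z'
      exact ⟨u, v, w, by linear_combination huv⟩
    · push Not at hGa
      have h4 : 3 * a ^ 2 ≤ 4 * (a * G - F ^ 2) := by nlinarith
      have ha1 : a = 1 := by
        by_contra hne
        have ha2 : 2 ≤ a := by omega
        have h5 : (3 * a ^ 2) ^ 2 ≤ (4 * (a * G - F ^ 2)) ^ 2 :=
          pow_le_pow_left₀ (by positivity) h4 2
        have h6 : 27 * a ^ 4 ≤ 64 * a := by nlinarith
        have h7 : 8 * a ≤ a ^ 4 := by
          have : 8 ≤ a ^ 3 := by
            calc (8 : ℤ) = 2 ^ 3 := by norm_num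
              _ ≤ a ^ 3 := pow_le_pow_left₀ (by norm_num) ha2 3
          nlinarith
        linarith
      subst ha1
      have hF0 : F = 0 := by
        have : F ^ 2 < 1 := by linarith
        have : F ^ 2 = 0 := by nlinarith [sq_nonneg F]
        exact pow_eq_zero_iff (two_ne_zero) |>.1 this
      subst hF0
      have hG1 : G = 1 := by nlinarith
      subst hG1
      exact ⟨X + e' * z', y' + H * z', z', by linear_combination z' ^ 2 * hdet2⟩

theorem key3 (n d A m : ℤ) (hd : 0 < d) (hA : 0 < A) (h : A = d * n - 1) (hm : A ∣ m ^ 2 + d) :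
    ∃ u v w : ℤ, n = u ^ 2 + v ^ 2 + w ^ 2 := by
  obtain ⟨a, ha⟩ := hm
  have hapos : 0 < a := by
    have : 0 < A * a := by rw [← ha]; positivity
    exact pos_of_mul_pos_right this hA.le
  obtain ⟨u, v, w, huv⟩ := ter_red _ a A n 0 1 m rfl hapos (by linarith)
    (by linear_combination (-n) * ha - h) 0 0 1
  exact ⟨u, v, w, by linear_combination huv⟩

open NumberTheorySymbols in
theorem sq_of_jac (p : ℕ) (d : ℤ) (hp : p.Prime) (h : J(-d | p) = 1) :
    ∃ m : ℤ, (p : ℤ) ∣ m ^ 2 + d := by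
  haveI : Fact p.Prime := ⟨hp⟩
  obtain ⟨r, hr⟩ := ZMod.isSquare_of_jacobiSym_eq_one h
  obtain ⟨m, rfl⟩ := ZMod.intCast_surjective r
  refine ⟨m, ?_⟩
  rw [← ZMod.intCast_zmod_eq_zero_iff_dvd]
  push_cast at hr ⊢
  linear_combination -hr

open NumberTheorySymbols in
theorem three_two_mod_four (n : ℕ) (hn : n % 4 = 2) :
    ∃ u v w : ℤ, (n : ℤ) = u ^ 2 + v ^ 2 + w ^ 2 := by
  obtain ⟨a, ha⟩ : ∃ a, n = a + 1 := ⟨n - 1, by omega⟩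
  have hodd : Odd a := Nat.odd_iff.2 (by omega)
  have hc : a.Coprime (4 * n) := by
    apply Nat.Coprime.mul_right
    · exact Nat.Coprime.pow_right 2 (Nat.coprime_two_right.2 hodd)
    · apply Nat.isCoprime_iff_coprime.1
      exact ⟨-1, 1, by rw [ha]; push_cast; ring⟩
  obtain ⟨p, hpn, hp, hpm⟩ := Nat.forall_exists_prime_gt_and_modEq (4 * n) (by omega) hc
  obtain ⟨j, hj⟩ : ∃ j, p = a + 4 * n * j := by
    obtain ⟨j, hj⟩ := (Nat.modEq_iff_dvd' (by omega)).1 hpm.symm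
    exact ⟨j, by omega⟩
  obtain ⟨d, hd⟩ : ∃ d, d = 4 * j + 1 := ⟨_, rfl⟩
  have hpd : (p : ℤ) = d * n - 1 := by rw [hj, hd, ha]; push_cast; ring
  have hp4 : p % 4 = 1 := by
    rw [hj, mul_assoc, Nat.add_mul_mod_self_left]; omega
  have hd4 : d % 4 = 1 := by omega
  have hpo : Odd p := Nat.odd_iff.2 (by omega)
  have hdo : Odd d := Nat.odd_iff.2 (by omega)
  have hJ : J(-(d : ℤ) | p) = 1 := by
    rw [show -(d : ℤ) = (-1) * d by ring, jacobiSym.mul_left, jacobiSym.at_neg_one hpo,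
      ZMod.χ₄_nat_one_mod_four hp4, jacobiSym.quadratic_reciprocity_one_mod_four hd4 hpo,
      jacobiSym.mod_left' (a₂ := -1), jacobiSym.at_neg_one hdo, ZMod.χ₄_nat_one_mod_four hd4]
    · norm_num
    · apply Int.ModEq.symm
      rw [Int.modEq_iff_dvd]
      exact ⟨n, by linarith⟩
  obtain ⟨m, hm⟩ := sq_of_jac p d hp hJ
  exact key3 n d p m (by omega) (by exact_mod_cast hp.pos) hpd hm

open NumberTheorySymbols in
theorem three_odd (n c : ℕ) (hn : n % 8 = 3 ∧ c = 1 ∨ n % 8 = 1 ∧ c = 3 ∨ n % 8 = 5 ∧ c = 3) :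
    ∃ u v w : ℤ, (n : ℤ) = u ^ 2 + v ^ 2 + w ^ 2 := by
  obtain ⟨a, ha⟩ : ∃ a, c * n = 2 * a + 1 := by
    rcases hn with ⟨_, rfl⟩ | ⟨_, rfl⟩ | ⟨_, rfl⟩
    · exact ⟨n / 2, by omega⟩
    · exact ⟨3 * n / 2, by omega⟩
    · exact ⟨3 * n / 2, by omega⟩
  have hodd : Odd a := Nat.odd_iff.2 (by rcases hn with ⟨_, rfl⟩ | ⟨_, rfl⟩ | ⟨_, rfl⟩ <;> omega)
  have haz : (c : ℤ) * n = 2 * a + 1 := by exact_mod_cast ha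
  have hc : a.Coprime (4 * n) := by
    apply Nat.Coprime.mul_right
    · exact Nat.Coprime.pow_right 2 (Nat.coprime_two_right.2 hodd)
    · apply Nat.isCoprime_iff_coprime.1
      exact ⟨-2, c, by linarith⟩
  obtain ⟨p, hpn, hp, hpm⟩ := Nat.forall_exists_prime_gt_and_modEq (4 * n + a) (by omega) hc
  obtain ⟨j, hj⟩ : ∃ j, p = a + 4 * n * j := by
    obtain ⟨j, hj⟩ := (Nat.modEq_iff_dvd' (by omega)).1 hpm.symm
    exact ⟨j, by omega⟩
  obtain ⟨d, hd⟩ : ∃ d, d = 8 * j + c := ⟨_, rfl⟩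
  have hpd : 2 * (p : ℤ) = d * n - 1 := by
    rw [hj, hd]; push_cast; linear_combination -haz
  have hp4' : p % 4 = a % 4 := by
    rw [hj, mul_assoc, Nat.add_mul_mod_self_left]
  have hpo : Odd p := Nat.odd_iff.2 (by have := Nat.odd_iff.1 hodd; omega)
  have hdo : Odd d := Nat.odd_iff.2 (by omega)
  have hpdJ : J(p | d) = 1 := by
    have h2 : J(-2 | d) = 1 := by
      rw [jacobiSym.at_neg_two hdo, ZMod.χ₈'_nat_eq_if_mod_eight]
      have : d % 8 = 1 ∨ d % 8 = 3 := by omega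
      have h' : d % 2 = 1 := Nat.odd_iff.1 hdo
      simp [this, h']
    have h3 : J(-2 * p | d) = 1 := by
      rw [jacobiSym.mod_left' (a₂ := 1), jacobiSym.one_left]
      apply Int.ModEq.symm
      rw [Int.modEq_iff_dvd]
      exact ⟨-n, by linarith⟩
    rw [jacobiSym.mul_left, h2, one_mul] at h3
    exact h3
  have hJ : J(-(d : ℤ) | p) = 1 := by
    rw [show -(d : ℤ) = (-1) * d by ring, jacobiSym.mul_left, jacobiSym.at_neg_one hpo]
    have : p % 4 = 1 ∨ (p % 4 = 3 ∧ d % 4 = 3) := by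
      rcases hn with ⟨_, rfl⟩ | ⟨_, rfl⟩ | ⟨_, rfl⟩ <;> omega
    rcases this with hp4 | ⟨hp4, hd4⟩
    · rw [ZMod.χ₄_nat_one_mod_four hp4, jacobiSym.quadratic_reciprocity_one_mod_four' hdo hp4,
        hpdJ]; norm_num
    · rw [ZMod.χ₄_nat_three_mod_four hp4,
        jacobiSym.quadratic_reciprocity_three_mod_four hd4 hp4, hpdJ]; norm_num
  obtain ⟨m, hm⟩ := sq_of_jac p d hp hJ
  obtain ⟨m', hm', hmo⟩ : ∃ m' : ℤ, (p : ℤ) ∣ m' ^ 2 + d ∧ Odd m' := by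
    rcases Int.even_or_odd m with he | ho
    · refine ⟨m + p, ?_, he.add_odd (by exact_mod_cast hpo)⟩
      have : (m + p) ^ 2 + d = (m ^ 2 + d) + p * (2 * m + p) := by ring
      rw [this]
      exact dvd_add hm (dvd_mul_right _ _)
    · exact ⟨m, hm, ho⟩
  have h2 : (2 : ℤ) ∣ m' ^ 2 + d := by
    have : Even (m' ^ 2 + (d : ℤ)) := (hmo.pow).add_odd (by exact_mod_cast hdo)
    exact this.two_dvd
  have hcop : IsCoprime (2 : ℤ) (p : ℤ) := by
    have := Nat.isCoprime_iff_coprime.2 (Nat.coprime_two_left.2 hpo)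
    exact_mod_cast this
  have hppos : (0 : ℤ) < p := by exact_mod_cast hp.pos
  have hdpos : 0 < d := hdo.pos
  exact key3 n d (2 * p) m' (by exact_mod_cast hdpos) (by linarith) hpd (hcop.mul_dvd h2 hm')

theorem three_sq (n : ℤ) (h0 : 0 < n) (h4 : n % 4 ≠ 0) (h7 : n % 8 ≠ 7) :
    ∃ u v w : ℤ, n = u ^ 2 + v ^ 2 + w ^ 2 := by
  obtain ⟨k, rfl⟩ := Int.eq_ofNat_of_zero_le h0.le
  have : k % 4 = 2 ∨ k % 8 = 3 ∨ k % 8 = 1 ∨ k % 8 = 5 := by omega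
  rcases this with h | h | h | h
  · exact three_two_mod_four k h
  · exact three_odd k 1 (by omega)
  · exact three_odd k 3 (by omega)
  · exact three_odd k 3 (by omega)

/-- Primitive at 3: the last entry is a nonmultiple of 3. -/
theorem prim_three : ∀ k : ℕ, ∀ n : ℤ, n.toNat = k → 0 < n →
    (∃ u v w : ℤ, n = u ^ 2 + v ^ 2 + w ^ 2) →
    ∃ u v w : ℤ, n = u ^ 2 + v ^ 2 + w ^ 2 ∧ w % 3 ≠ 0 := by
  intro k
  induction k using Nat.strong_induction_on with
  | _ k ih =>
    rintro n hk hn ⟨u, v, w, h⟩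
    by_cases hw : w % 3 = 0
    swap
    · exact ⟨u, v, w, h, hw⟩
    by_cases hv : v % 3 = 0
    swap
    · exact ⟨u, w, v, by linarith, hv⟩
    by_cases hu : u % 3 = 0
    swap
    · exact ⟨w, v, u, by linarith, hu⟩
    obtain ⟨a, rfl⟩ := Int.dvd_of_emod_eq_zero hu
    obtain ⟨b, rfl⟩ := Int.dvd_of_emod_eq_zero hv
    obtain ⟨c, rfl⟩ := Int.dvd_of_emod_eq_zero hw
    have h9 : n = 9 * (a ^ 2 + b ^ 2 + c ^ 2) := by rw [h]; ring
    obtain ⟨a', b', c', h', hc'⟩ := ih (a ^ 2 + b ^ 2 + c ^ 2).toNat (by omega) _ rfl (by omega)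
      ⟨a, b, c, rfl⟩
    rw [h'] at h9
    by_cases hs : (a' + b' + c') % 3 = 0
    · refine ⟨2 * a' + 2 * b' + c', 2 * b' - 2 * c' - a', -2 * c' + 2 * a' - b',
        by rw [h9]; ring, by omega⟩
    · refine ⟨2 * a' + 2 * b' - c', 2 * b' + 2 * c' - a', 2 * c' + 2 * a' - b',
        by rw [h9]; ring, by omega⟩

theorem oct_of (w : ℤ) (h : w % 3 ≠ 0) : ∃ t : ℤ, 3 * (3 * t ^ 2 - 2 * t) = w ^ 2 - 1 := by
  have : w % 3 = 1 ∨ w % 3 = 2 := by omega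
  rcases this with h | h
  · obtain ⟨t, ht⟩ : ∃ t, w = 1 - 3 * t := ⟨(1 - w) / 3, by omega⟩
    exact ⟨t, by rw [ht]; ring⟩
  · obtain ⟨t, ht⟩ : ∃ t, w = 3 * t - 1 := ⟨(w + 1) / 3, by omega⟩
    exact ⟨t, by rw [ht]; ring⟩

theorem sq3_oct (n : ℤ) (hn : 0 < n) (h : ∃ u v w : ℤ, n = u ^ 2 + v ^ 2 + w ^ 2) :
    ∃ x y t : ℤ, n = x ^ 2 + y ^ 2 + 3 * (3 * t ^ 2 - 2 * t) + 1 := by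
  obtain ⟨u, v, w, h, hw⟩ := prim_three _ n rfl hn h
  obtain ⟨t, ht⟩ := oct_of w hw
  exact ⟨u, v, t, by rw [ht, h]; ring⟩

theorem quat_univ (α : ℤ) (h4 : 4 ≤ α) (h6 : α ≤ 6) : ∀ k : ℕ, ∀ n : ℤ, n.toNat = k → 0 < n →
    ∃ u v w z : ℤ, n = u ^ 2 + v ^ 2 + w ^ 2 + α * z ^ 2 := by
  intro k
  induction k using Nat.strong_induction_on with
  | _ k ih =>
    intro n hk hn
    by_cases h0 : n % 4 = 0
    · obtain ⟨m, rfl⟩ := Int.dvd_of_emod_eq_zero h0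
      obtain ⟨u, v, w, z, h⟩ := ih m.toNat (by omega) m rfl (by omega)
      exact ⟨2 * u, 2 * v, 2 * w, 2 * z, by rw [h]; ring⟩
    by_cases h7 : n % 8 = 7
    · obtain ⟨u, v, w, h⟩ := three_sq (n - α) (by omega) (by omega) (by omega)
      exact ⟨u, v, w, 1, by linarith⟩
    · obtain ⟨u, v, w, h⟩ := three_sq n hn h0 h7
      exact ⟨u, v, w, 0, by linarith⟩

theorem part_one (α : ℤ) (h4 : 4 ≤ α) (h6 : α ≤ 6) (N : ℤ) (hN : 0 ≤ N) :
    ∃ x y z t : ℤ, x ^ 2 + y ^ 2 + α * z ^ 2 + 3 * (3 * t ^ 2 - 2 * t) = N := by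
  obtain ⟨u, v, w, z, h⟩ := quat_univ α h4 h6 _ (N + 1) rfl (by omega)
  by_cases hp : 0 < u ^ 2 + v ^ 2 + w ^ 2
  · obtain ⟨x, y, t, ht⟩ := sq3_oct _ hp ⟨u, v, w, rfl⟩
    exact ⟨x, y, z, t, by linarith⟩
  · have h0 : u ^ 2 + v ^ 2 + w ^ 2 = 0 := by
      have : 0 ≤ u ^ 2 + v ^ 2 + w ^ 2 := by positivity
      omega
    have hz : ∃ u v w : ℤ, N + 1 = u ^ 2 + v ^ 2 + w ^ 2 := by
      have : α = 4 ∨ α = 5 ∨ α = 6 := by omega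
      rcases this with rfl | rfl | rfl
      · exact ⟨2 * z, 0, 0, by linarith⟩
      · exact ⟨2 * z, z, 0, by linarith⟩
      · exact ⟨2 * z, z, z, by linarith⟩
    obtain ⟨x, y, t, ht⟩ := sq3_oct _ (by omega) hz
    exact ⟨x, y, 0, t, by linarith⟩

theorem four_prim : ∀ k : ℕ, ∀ n : ℤ, n.toNat = k → 2 ≤ n →
    ∃ u v w s : ℤ, n = u ^ 2 + v ^ 2 + w ^ 2 + s ^ 2 ∧ w % 3 ≠ 0 ∧ s % 3 ≠ 0 := by
  intro k
  induction k using Nat.strong_induction_on with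
  | _ k ih =>
    intro n hk hn
    by_cases h0 : n % 4 = 0
    · by_cases h4 : n = 4
      · exact ⟨1, 1, 1, 1, by rw [h4]; norm_num, by norm_num, by norm_num⟩
      obtain ⟨m, rfl⟩ := Int.dvd_of_emod_eq_zero h0
      obtain ⟨u, v, w, z, h, h1, h2⟩ := ih m.toNat (by omega) m rfl (by omega)
      exact ⟨2 * u, 2 * v, 2 * w, 2 * z, by rw [h]; ring, by omega, by omega⟩
    by_cases h1 : n % 4 = 1
    · obtain ⟨u, v, w, h, hw⟩ := prim_three _ (n - 4) rfl (by omega)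
        (three_sq (n - 4) (by omega) (by omega) (by omega))
      exact ⟨u, v, w, 2, by linarith, hw, by norm_num⟩
    · obtain ⟨u, v, w, h, hw⟩ := prim_three _ (n - 1) rfl (by omega)
        (three_sq (n - 1) (by omega) (by omega) (by omega))
      exact ⟨u, v, w, 1, by linarith, hw, by norm_num⟩

theorem three_sq_four (n : ℤ) (h : ∃ u v w : ℤ, n = u ^ 2 + v ^ 2 + w ^ 2) :
    ∃ u v w : ℤ, 4 * n = u ^ 2 + v ^ 2 + w ^ 2 := by
  obtain ⟨u, v, w, h⟩ := h
  exact ⟨2 * u, 2 * v, 2 * w, by rw [h]; ring⟩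

theorem part_two_aux (β : ℤ) (h4 : 4 ≤ β) (h6 : β ≤ 6) (n : ℤ) (hn : 0 < n) :
    ∃ t : ℤ, 0 < n - β * (3 * t ^ 2 - 2 * t) ∧
      ∃ u v w : ℤ, n - β * (3 * t ^ 2 - 2 * t) = u ^ 2 + v ^ 2 + w ^ 2 := by
  have go : ∀ t : ℤ, 0 < n - β * (3 * t ^ 2 - 2 * t) → (n - β * (3 * t ^ 2 - 2 * t)) % 4 ≠ 0 →
      (n - β * (3 * t ^ 2 - 2 * t)) % 8 ≠ 7 → ∃ t : ℤ, 0 < n - β * (3 * t ^ 2 - 2 * t) ∧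
      ∃ u v w : ℤ, n - β * (3 * t ^ 2 - 2 * t) = u ^ 2 + v ^ 2 + w ^ 2 :=
    fun t h1 h2 h3 => ⟨t, h1, three_sq _ h1 h2 h3⟩
  by_cases h0 : n % 4 = 0
  swap
  · by_cases h7 : n % 8 = 7
    · exact go 1 (by norm_num; omega) (by norm_num; omega) (by norm_num; omega)
    · exact go 0 (by norm_num; omega) (by norm_num; omega) (by norm_num; omega)
  have : β = 4 ∨ β = 5 ∨ β = 6 := by omega
  rcases this with rfl | rfl | rfl
  · obtain ⟨m, rfl⟩ := Int.dvd_of_emod_eq_zero h0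
    have go4 : ∀ t : ℤ, 0 < m - (3 * t ^ 2 - 2 * t) → (m - (3 * t ^ 2 - 2 * t)) % 4 ≠ 0 →
      (m - (3 * t ^ 2 - 2 * t)) % 8 ≠ 7 → ∃ t : ℤ, 0 < 4 * m - 4 * (3 * t ^ 2 - 2 * t) ∧
      ∃ u v w : ℤ, 4 * m - 4 * (3 * t ^ 2 - 2 * t) = u ^ 2 + v ^ 2 + w ^ 2 := by
      intro t h1 h2 h3
      refine ⟨t, by linarith, ?_⟩
      rw [← mul_sub]
      exact three_sq_four _ (three_sq _ h1 h2 h3)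
    by_cases h8 : m % 8 = 0
    · exact go4 (-1) (by norm_num; omega) (by norm_num; omega) (by norm_num; omega)
    by_cases h8 : m % 8 = 4 ∨ m % 8 = 7
    · exact go4 1 (by norm_num; omega) (by norm_num; omega) (by norm_num; omega)
    · exact go4 0 (by norm_num; omega) (by norm_num; omega) (by norm_num; omega)
  · by_cases h8 : n % 8 = 0
    · exact go 1 (by norm_num; omega) (by norm_num; omega) (by norm_num; omega)
    by_cases h25 : 25 < n
    · exact go (-1) (by norm_num; omega) (by norm_num; omega) (by norm_num; omega)
    have : n = 4 ∨ n = 12 ∨ n = 20 := by omega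
    rcases this with rfl | rfl | rfl
    · exact ⟨0, by norm_num, 2, 0, 0, by norm_num⟩
    · exact ⟨0, by norm_num, 2, 2, 2, by norm_num⟩
    · exact ⟨0, by norm_num, 4, 2, 0, by norm_num⟩
  · by_cases h8 : n = 4
    · subst h8
      exact ⟨0, by norm_num, 2, 0, 0, by norm_num⟩
    · exact go 1 (by norm_num; omega) (by norm_num; omega) (by norm_num; omega)


theorem universal_case_4_4 :
    (∀ α : ℤ, 4 ≤ α → α ≤ 6 → ∀ N : ℤ, 0 ≤ N →
      ∃ x y z t : ℤ,
        x ^ 2 + y ^ 2 + α * z ^ 2 + 3 * (3 * t ^ 2 - 2 * t) = N) ∧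
    (∀ β : ℤ, 3 ≤ β → β ≤ 6 → ∀ N : ℤ, 0 ≤ N →
      ∃ x y z t : ℤ,
        x ^ 2 + y ^ 2 + 3 * (3 * z ^ 2 - 2 * z) + β * (3 * t ^ 2 - 2 * t) = N) := by

  refine ⟨part_one, ?_⟩
  intro β h3 h6 N hN
  by_cases hb : β = 3
  · subst hb
    obtain ⟨u, v, w, s, h, hw, hs⟩ := four_prim _ (N + 2) rfl (by omega)
    obtain ⟨z, hz⟩ := oct_of w hw
    obtain ⟨t, ht⟩ := oct_of s hs
    exact ⟨u, v, z, t, by linarith⟩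
  · obtain ⟨t, hpos, ht⟩ := part_two_aux β (by omega) h6 (N + 1) (by omega)
    obtain ⟨x, y, z, h⟩ := sq3_oct _ hpos ht
    exact ⟨x, y, z, t, by linarith⟩
end
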